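/- Let 2 < p < ∞. There is a constant C' = C'(p) such that for every finite set Λ ⊂ ℕ, ‖Σ_{m∈Λ} ψ_m‖_{L_p} ≤ C' |Λ|^{1/2}. -/

import Mathlib

open MeasureTheory Filter

noncomputable section

/-- Rademacher functions `r_k(t) = sign (sin (2^k π t))`, for `k ≥ 1`. -/
def rademacher (k : ℕ) (t : ℝ) : ℝ := Real.sign (Real.sin ((2:ℝ) ^ k * Real.pi * t))

/-- The Walsh system: for `n = ∑ ε_j 2^(j-1)`, `W_n = ∏ r_j^(ε_j)`. -/
def walsh (n : ℕ) (t : ℝ) : ℝ :=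
  ∏ j ∈ Finset.range n, if n.testBit j then rademacher (j + 1) t else 1

/-- The Olevskiĭ matrix entries `a_{ij}^{(k)}`, with `1 ≤ i, j ≤ 2^k` (1-based indices). -/
def olevskii (k i j : ℕ) : ℝ :=
  if j = 1 then (2:ℝ) ^ (-(k:ℝ) / 2)
  else
    let s := Nat.log 2 (j - 1)
    let ν := j - 2 ^ s
    if (ν - 1) * 2 ^ (k - s) < i ∧ i ≤ (2 * ν - 1) * 2 ^ (k - s - 1) then
      (2:ℝ) ^ (((s:ℝ) - k) / 2)
    else if (2 * ν - 1) * 2 ^ (k - s - 1) < i ∧ i ≤ ν * 2 ^ (k - s) then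
      -((2:ℝ) ^ (((s:ℝ) - k) / 2))
    else 0

/-- `N_k = 2^(10^k)`. -/
def Nn (k : ℕ) : ℕ := 2 ^ 10 ^ k

/-- `F_0 = 0`, `F_k = F_(k-1) + N_k - 1`. -/
def Fn : ℕ → ℕ
  | 0 => 0
  | k + 1 => Fn k + Nn (k + 1) - 1

/-- `φ_k`, the `k`-th (1-based) Walsh function that is not a Rademacher function,
in the Walsh order. -/
def phi (k : ℕ) : ℝ → ℝ := walsh (Nat.nth (fun n => ¬ ∃ m : ℕ, n = 2 ^ m) (k - 1))

/-- `ψ_i^{(k)} = φ_k/√N_k + ∑_{j=2}^{N_k} a_{ij}^{(10^k)} r_{F_{k-1}+j-1}`. -/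
def psiBlock (k i : ℕ) : ℝ → ℝ := fun t =>
  phi k t / Real.sqrt (Nn k) +
    ∑ j ∈ Finset.Icc 2 (Nn k), olevskii (10 ^ k) i j * rademacher (Fn (k - 1) + j - 1) t

/-- Cumulative block lengths: `cum k = N_1 + ⋯ + N_k`. -/
def cum : ℕ → ℕ
  | 0 => 0
  | k + 1 => cum k + Nn (k + 1)

lemma le_cum (k : ℕ) : k ≤ cum k := by
  induction k with
  | zero => simp [cum]
  | succ k ih =>
      have h : 1 ≤ Nn (k + 1) := Nat.one_le_two_pow
      simp only [cum]; omega

/-- `psi m` is `ψ_{m+1}`, the `(m+1)`-th element of the system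
`B = (ψ_1^{(1)}, …, ψ_{N_1}^{(1)}, ψ_1^{(2)}, …)` (0-based global indexing). -/
def psi (m : ℕ) : ℝ → ℝ :=
  let k := Nat.find (show ∃ k, m + 1 ≤ cum k from ⟨m + 1, le_cum (m + 1)⟩)
  psiBlock k (m + 1 - cum (k - 1))

/-- `⟨f, g⟩ = ∫_0^1 f g`. -/
def inner01 (f g : ℝ → ℝ) : ℝ := ∫ t in Set.Icc (0:ℝ) 1, f t * g t

/-- The `L_p([0,1])` norm of a function. -/
def LpNorm (p : ℝ) (f : ℝ → ℝ) : ℝ :=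
  (∫ t in Set.Icc (0:ℝ) 1, |f t| ^ p) ^ (1 / p)

/-- `ρ` is a greedy ordering for the coefficient sequence `c`. -/
def IsGreedyOrdering (c : ℕ → ℝ) (ρ : ℕ → ℕ) : Prop :=
  Function.Injective ρ ∧ {j | c j ≠ 0} ⊆ Set.range ρ ∧
    ∀ j k : ℕ, j < k → |c (ρ k)| < |c (ρ j)| ∨ (|c (ρ k)| = |c (ρ j)| ∧ ρ j < ρ k)

end

theorem rad_succ (k : ℕ) (t : ℝ) : rademacher (k+1) t = rademacher k (2*t) := by
  unfold rademacher
  congr 2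
  ring

theorem rad_per (k : ℕ) (t : ℝ) : rademacher (k+1) (t+1) = rademacher (k+1) t := by
  unfold rademacher
  congr 1
  have : (2:ℝ)^(k+1) * Real.pi * (t+1) = 2^(k+1) * Real.pi * t + ((2^k : ℕ):ℝ) * (2*Real.pi) := by
    push_cast; ring
  rw [this, Real.sin_add_nat_mul_two_pi]

theorem rad_abs (k : ℕ) (t : ℝ) : |rademacher k t| ≤ 1 := by
  unfold rademacher
  rcases Real.sign_apply_eq (Real.sin ((2:ℝ) ^ k * Real.pi * t)) with h | h | h <;> rw [h] <;> simp

theorem rad_meas (k : ℕ) : Measurable (rademacher k) := by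
  have h : Measurable Real.sign := by
    unfold Real.sign
    exact Measurable.ite measurableSet_Iio measurable_const
      (Measurable.ite measurableSet_Ioi measurable_const measurable_const)
  unfold rademacher
  exact h.comp (by fun_prop)

theorem rad_one_left {t : ℝ} (h : t ∈ Set.Ioo (0:ℝ) (1/2)) : rademacher 1 t = 1 := by
  unfold rademacher
  apply Real.sign_of_pos
  have := Real.pi_pos
  apply Real.sin_pos_of_pos_of_lt_pi
  · have := h.1; positivity
  · have := h.2; nlinarith

theorem rad_one_right {t : ℝ} (h : t ∈ Set.Ioo (1/2:ℝ) 1) : rademacher 1 t = -1 := by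
  have h2 := rad_per 0 (t - 1/2 - 1/2)
  unfold rademacher
  apply Real.sign_of_neg
  have := Real.pi_pos
  have h3 : Real.sin ((2:ℝ)^1 * Real.pi * t) = - Real.sin (2 * Real.pi * t - Real.pi) := by
    rw [Real.sin_sub_pi]; simp
  rw [h3, neg_lt_zero]
  apply Real.sin_pos_of_pos_of_lt_pi
  · have := h.1; nlinarith
  · have := h.2; nlinarith

/-- The Rademacher sum. -/
noncomputable def radSum (n : ℕ) (c : ℕ → ℝ) (t : ℝ) : ℝ := ∑ l ∈ Finset.range n, c l * rademacher (l+1) t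

theorem radSum_meas (n : ℕ) (c : ℕ → ℝ) : Measurable (radSum n c) := by
  unfold radSum
  have := rad_meas
  fun_prop

theorem radSum_abs (n : ℕ) (c : ℕ → ℝ) (t : ℝ) : |radSum n c t| ≤ ∑ l ∈ Finset.range n, |c l| := by
  unfold radSum
  refine (Finset.abs_sum_le_sum_abs _ _).trans (Finset.sum_le_sum fun l _ => ?_)
  rw [abs_mul]
  exact mul_le_of_le_one_right (abs_nonneg _) (rad_abs _ _)

theorem radSum_per (n : ℕ) (c : ℕ → ℝ) (t : ℝ) : radSum n c (t+1) = radSum n c t := by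
  unfold radSum
  simp only [rad_per]

theorem radSum_succ (n : ℕ) (c : ℕ → ℝ) (t : ℝ) :
    radSum (n+1) c t = radSum n (fun l => c (l+1)) (2*t) + c 0 * rademacher 1 t := by
  unfold radSum
  rw [Finset.sum_range_succ']
  congr 1
  refine Finset.sum_congr rfl fun l _ => ?_
  rw [rad_succ (l+1)]

theorem exp_radSum_int (n : ℕ) (c : ℕ → ℝ) (μ : Measure ℝ) [IsFiniteMeasure μ] :
    Integrable (fun t => Real.exp (radSum n c t)) μ := by
  refine Integrable.of_bound (C := Real.exp (∑ l ∈ Finset.range n, |c l|))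
    ((Real.measurable_exp.comp (radSum_meas n c)).aestronglyMeasurable) ?_
  refine Filter.Eventually.of_forall fun t => ?_
  rw [Real.norm_eq_abs, abs_of_pos (Real.exp_pos _)]
  exact Real.exp_le_exp.2 ((le_abs_self _).trans (radSum_abs n c t))

theorem exp_radSum_ii (n : ℕ) (c : ℕ → ℝ) (a b : ℝ) :
    IntervalIntegrable (fun t => Real.exp (radSum n c t)) volume a b :=
  ⟨exp_radSum_int n c _, exp_radSum_int n c _⟩

theorem exp_radSum_eq (n : ℕ) : ∀ c : ℕ → ℝ,
    ∫ t in (0:ℝ)..1, Real.exp (radSum n c t) = ∏ l ∈ Finset.range n, Real.cosh (c l) := by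
  induction n with
  | zero => intro c; simp [radSum]
  | succ n ih =>
    intro c
    rw [← intervalIntegral.integral_add_adjacent_intervals (exp_radSum_ii (n+1) c 0 (1/2))
      (exp_radSum_ii (n+1) c (1/2) 1)]
    have h1 : ∫ t in (0:ℝ)..(1/2), Real.exp (radSum (n+1) c t)
        = ∫ t in (0:ℝ)..(1/2), Real.exp (c 0) * Real.exp (radSum n (fun l => c (l+1)) (2*t)) := by
      apply intervalIntegral.integral_congr_Ioo_of_le (by norm_num)
      intro t ht
      simp only []
      rw [radSum_succ, rad_one_left ht, Real.exp_add]; ring_nf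
    have h2 : ∫ t in (1/2:ℝ)..1, Real.exp (radSum (n+1) c t)
        = ∫ t in (1/2:ℝ)..1, Real.exp (-c 0) * Real.exp (radSum n (fun l => c (l+1)) (2*t)) := by
      apply intervalIntegral.integral_congr_Ioo_of_le (by norm_num)
      intro t ht
      simp only []
      rw [radSum_succ, rad_one_right ht, Real.exp_add]; ring_nf
    rw [h1, h2, intervalIntegral.integral_const_mul, intervalIntegral.integral_const_mul]
    rw [intervalIntegral.integral_comp_mul_left
        (fun t => Real.exp (radSum n (fun l => c (l+1)) t)) (two_ne_zero),
      intervalIntegral.integral_comp_mul_left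
        (fun t => Real.exp (radSum n (fun l => c (l+1)) t)) (two_ne_zero)]
    have h3 : ∫ t in (1:ℝ)..2, Real.exp (radSum n (fun l => c (l+1)) t)
        = ∫ t in (0:ℝ)..1, Real.exp (radSum n (fun l => c (l+1)) t) := by
      have := intervalIntegral.integral_comp_add_right (a := (0:ℝ)) (b := 1)
        (fun t => Real.exp (radSum n (fun l => c (l+1)) t)) 1
      simp only [radSum_per] at this
      rw [this]; norm_num
    norm_num
    rw [h3, ih, Finset.prod_range_succ', Real.cosh_eq (c 0)]
    ring

theorem exp_radSum_le (n : ℕ) (c : ℕ → ℝ) (h : ∑ l ∈ Finset.range n, c l ^ 2 ≤ 1) :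
    ∫ t in Set.Icc (0:ℝ) 1, Real.exp (radSum n c t) ≤ Real.exp (1/2) := by
  rw [integral_Icc_eq_integral_Ioc, ← intervalIntegral.integral_of_le zero_le_one, exp_radSum_eq]
  calc _ ≤ ∏ l ∈ Finset.range n, Real.exp (c l ^ 2 / 2) :=
        Finset.prod_le_prod (fun l _ => (Real.cosh_pos _).le)
          (fun l _ => Real.cosh_le_exp_half_sq _)
    _ = Real.exp ((∑ l ∈ Finset.range n, c l ^ 2) / 2) := by
        rw [← Real.exp_sum, Finset.sum_div]
    _ ≤ _ := Real.exp_le_exp.2 (by linarith)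

theorem rpow_le_exp (p x : ℝ) (hp : 0 < p) (hx : 0 ≤ x) : x ^ p ≤ p ^ p * Real.exp x := by
  have h1 : x / p ≤ Real.exp (x/p) := by linarith [Real.add_one_le_exp (x/p)]
  have h2 : (x/p)^p ≤ Real.exp (x/p) ^ p := Real.rpow_le_rpow (by positivity) h1 hp.le
  rw [← Real.exp_mul, div_mul_cancel₀ _ hp.ne', Real.div_rpow hx hp.le,
    div_le_iff₀ (Real.rpow_pos_of_pos hp _)] at h2
  linarith

theorem main_bound (p : ℝ) (hp : 2 < p) (B : ℝ) : ∃ C : ℝ, ∀ (N : ℕ) (g : ℝ → ℝ) (n : ℕ)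
    (d : ℕ → ℝ), (∑ l ∈ Finset.range n, d l ^ 2 ≤ N) →
    (∀ t, |g t - radSum n d t| ≤ B * Real.sqrt N) → 
    LpNorm p g ≤ C * (N:ℝ)^((1:ℝ)/2) := by
  have hp0 : 0 < p := by linarith
  refine ⟨(p^p * Real.exp B * (2 * Real.exp (1/2)))^(1/p), ?_⟩
  intro N g n d hd hg
  rw [← Real.sqrt_eq_rpow]
  unfold LpNorm
  set s := Real.sqrt N with hs
  have hs0 : 0 ≤ s := Real.sqrt_nonneg _
  have hss : s^2 = N := Real.sq_sqrt (by positivity)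
  rcases hs0.eq_or_lt with h0 | hpos
  · have hN : (N:ℝ) = 0 := by rw [← hss, ← h0]; simp
    have hdl : ∀ l ∈ Finset.range n, d l ^ 2 = 0 := by
      rw [hN] at hd
      exact (Finset.sum_eq_zero_iff_of_nonneg (fun _ _ => sq_nonneg _)).1
        (le_antisymm hd (Finset.sum_nonneg (fun _ _ => sq_nonneg _)))
    have hgz : ∀ t, g t = 0 := by
      intro t
      have h1 := hg t
      have h2 : radSum n d t = 0 := by
        unfold radSum
        apply Finset.sum_eq_zero
        intro l hl
        have := hdl l hl
        simp at this
        simp [this]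
      rw [h2, ← h0] at h1
      simpa using h1
    simp only [hgz, ← h0]
    simp [hp0.ne', Real.zero_rpow]
  · have hI1 := exp_radSum_le n (fun l => d l / s) (by
      simp only [div_pow, ← Finset.sum_div, hss]
      apply div_le_one_of_le₀ hd (by positivity))
    have hI2 := exp_radSum_le n (fun l => -(d l / s)) (by
      simp only [neg_sq, div_pow, ← Finset.sum_div, hss]
      apply div_le_one_of_le₀ hd (by positivity))
    have e1 : ∀ t, radSum n (fun l => d l / s) t = radSum n d t / s := by
      intro t; unfold radSum; rw [Finset.sum_div]; exact Finset.sum_congr rfl fun _ _ => by ring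
    have e2 : ∀ t, radSum n (fun l => -(d l / s)) t = - (radSum n d t / s) := by
      intro t; rw [← e1]; unfold radSum; rw [← Finset.sum_neg_distrib]
      exact Finset.sum_congr rfl fun _ _ => by ring
    have hpt : ∀ t, |g t|^p ≤ s^p * (p^p * Real.exp B) *
        (Real.exp (radSum n (fun l => d l / s) t) + Real.exp (radSum n (fun l => -(d l / s)) t)) := by
      intro t
      have h1 : |g t| = s * (|g t| / s) := by field_simp
      rw [h1, Real.mul_rpow hs0 (by positivity), mul_assoc]
      refine mul_le_mul_of_nonneg_left ?_ (by positivity)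
      refine (rpow_le_exp p _ hp0 (by positivity)).trans ?_
      rw [mul_assoc]
      refine mul_le_mul_of_nonneg_left ?_ (by positivity)
      have h2 : |g t| / s ≤ B + |radSum n d t / s| := by
        rw [abs_div, abs_of_pos hpos, div_le_iff₀ hpos, add_mul, div_mul_cancel₀ _ hpos.ne']
        have := abs_sub_abs_le_abs_sub (g t) (radSum n d t)
        linarith [hg t]
      refine (Real.exp_le_exp.2 h2).trans ?_
      rw [Real.exp_add, e1, e2]
      exact mul_le_mul_of_nonneg_left (Real.exp_abs_le _) (Real.exp_pos _).le
    have hint : ∫ t in Set.Icc (0:ℝ) 1, |g t|^p ≤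
        s^p * (p^p * Real.exp B) * (2 * Real.exp (1/2)) := by
      refine (integral_mono_of_nonneg (Filter.Eventually.of_forall fun t => by positivity) ?_
        (Filter.Eventually.of_forall hpt)).trans ?_
      · exact ((exp_radSum_int _ _ _).add (exp_radSum_int _ _ _)).const_mul _
      · rw [integral_const_mul, integral_add (exp_radSum_int _ _ _) (exp_radSum_int _ _ _)]
        refine mul_le_mul_of_nonneg_left (by linarith) (by positivity)
    calc _ ≤ (s^p * (p^p * Real.exp B) * (2 * Real.exp (1/2)))^(1/p) :=
          Real.rpow_le_rpow (integral_nonneg fun t => by positivity) hint (by positivity)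
      _ = _ := by
          rw [mul_assoc, Real.mul_rpow (by positivity) (by positivity), ← Real.rpow_mul hs0,
            mul_one_div_cancel hp0.ne', Real.rpow_one, mul_comm]

/-- Number of points of `S` in a dyadic interval of length `L`. -/
noncomputable def dyT (S : Finset ℕ) (L ν : ℕ) : ℝ :=
  ∑ i ∈ S, if ν * L < i ∧ i ≤ (ν + 1) * L then (1:ℝ) else 0

theorem dyT_split (S : Finset ℕ) (L ν : ℕ) :
    dyT S (2*L) ν = dyT S L (2*ν) + dyT S L (2*ν+1) := by
  unfold dyT
  rw [← Finset.sum_add_distrib]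
  refine Finset.sum_congr rfl fun i _ => ?_
  have e1 : ν * (2*L) = 2*ν*L := by ring
  have e2 : (ν+1) * (2*L) = 2*ν*L + L + L := by ring
  have e3 : (2*ν+1)*L = 2*ν*L + L := by ring
  have e4 : (2*ν+1+1)*L = 2*ν*L + L + L := by ring
  rw [e1, e2, e3, e4]
  generalize 2*ν*L = x
  split_ifs <;> first | (exfalso; omega) | norm_num

theorem olev_eq (k s ν i : ℕ) (hs : s < k) (hν : ν < 2^s) :
    olevskii k i (2^s + ν + 1) = (2:ℝ)^(((s:ℝ) - k)/2) *
      ((if (2*ν) * 2^(k-(s+1)) < i ∧ i ≤ (2*ν+1) * 2^(k-(s+1)) then (1:ℝ) else 0) -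
       (if (2*ν+1) * 2^(k-(s+1)) < i ∧ i ≤ (2*ν+1+1) * 2^(k-(s+1)) then (1:ℝ) else 0)) := by
  have hlog : Nat.log 2 (2^s + ν + 1 - 1) = s := by
    rw [Nat.add_sub_cancel]
    apply Nat.log_eq_of_pow_le_of_lt_pow
    · omega
    · rw [pow_succ]; omega
  have hp : 0 < 2^s := by positivity
  unfold olevskii
  rw [if_neg (by omega)]
  simp only [hlog]
  have e0 : 2^s + ν + 1 - 2^s = ν + 1 := by omega
  have e5 : 2^(k-s) = 2 * 2^(k-(s+1)) := by
    rw [← pow_succ']; congr 1; omega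
  have e6 : k - s - 1 = k-(s+1) := by omega
  rw [e0, e5, e6]
  generalize 2^(k-(s+1)) = L
  have e1 : (ν + 1 - 1) * (2*L) = 2*ν*L := by rw [Nat.add_sub_cancel]; ring
  have e2 : (ν+1) * (2*L) = 2*ν*L + L + L := by ring
  have e3 : (2*ν+1)*L = 2*ν*L + L := by ring
  have e4 : (2*ν+1+1)*L = 2*ν*L + L + L := by ring
  have e7 : 2 * (ν+1) - 1 = 2*ν+1 := by omega
  rw [e7, e1, e2, e3, e4]
  generalize 2*ν*L = x
  split_ifs <;> first | (exfalso; omega) | norm_num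

theorem sum_two_mul (f : ℕ → ℝ) (n : ℕ) :
    ∑ ν ∈ Finset.range (2*n), f ν = ∑ ν ∈ Finset.range n, (f (2*ν) + f (2*ν+1)) := by
  induction n with
  | zero => simp
  | succ n ih =>
    rw [Finset.sum_range_succ, ← ih, show 2*(n+1) = 2*n+1+1 by ring, Finset.sum_range_succ,
      Finset.sum_range_succ]
    ring

theorem bessel_aux (k : ℕ) (S : Finset ℕ) (s : ℕ) (hs : s ≤ k) :
    ∑ j ∈ Finset.Ico 1 (2^s), (∑ i ∈ S, olevskii k i (j+1))^2 ≤
      (2:ℝ)^((s:ℝ)-k) * ∑ ν ∈ Finset.range (2^s), dyT S (2^(k-s)) ν ^ 2 := by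
  induction s with
  | zero => simp; positivity
  | succ s ih =>
    rw [← Finset.sum_Ico_consecutive _ (Nat.one_le_two_pow (n := s))
      (Nat.pow_le_pow_right (by norm_num) (Nat.le_succ s))]
    have h1 : ∑ j ∈ Finset.Ico (2^s) (2^(s+1)), (∑ i ∈ S, olevskii k i (j+1))^2 =
        (2:ℝ)^((s:ℝ)-k) * ∑ ν ∈ Finset.range (2^s),
          (dyT S (2^(k-(s+1))) (2*ν) - dyT S (2^(k-(s+1))) (2*ν+1))^2 := by
      rw [Finset.sum_Ico_eq_sum_range, Finset.mul_sum]
      have : 2^(s+1) - 2^s = 2^s := by rw [pow_succ]; omega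
      rw [this]
      refine Finset.sum_congr rfl fun ν hν => ?_
      rw [Finset.sum_congr rfl fun i _ => olev_eq k s ν i (by omega) (Finset.mem_range.1 hν),
        ← Finset.mul_sum, Finset.sum_sub_distrib, mul_pow]
      congr 1
      rw [← Real.rpow_natCast, ← Real.rpow_mul (by norm_num)]
      congr 1
      push_cast; ring
    have h2 := ih (by omega)
    have e5 : 2^(k-s) = 2 * 2^(k-(s+1)) := by
      rw [← pow_succ']; congr 1; omega
    rw [h1]
    refine (add_le_add_left h2 _).trans ?_
    rw [← mul_add, ← Finset.sum_add_distrib, e5]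
    have e6 : (2:ℝ)^(((s+1:ℕ):ℝ)-k) = (2:ℝ)^((s:ℝ)-k) * 2 := by
      rw [show ((s+1:ℕ):ℝ)-k = (s:ℝ)-k + 1 by push_cast; ring, Real.rpow_add (by norm_num)]
      simp
    rw [e6, mul_assoc]
    refine mul_le_mul_of_nonneg_left (le_of_eq ?_) (by positivity)
    rw [pow_succ' 2 s, sum_two_mul, Finset.mul_sum]
    refine Finset.sum_congr rfl fun ν _ => ?_
    rw [dyT_split]; ring

theorem bessel (k : ℕ) (S : Finset ℕ) :
    ∑ j ∈ Finset.Icc 2 (2^k), (∑ i ∈ S, olevskii k i j)^2 ≤ S.card := by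
  have h := bessel_aux k S k le_rfl
  have h1 : ∑ j ∈ Finset.Icc 2 (2^k), (∑ i ∈ S, olevskii k i j)^2 =
      ∑ j ∈ Finset.Ico 1 (2^k), (∑ i ∈ S, olevskii k i (j+1))^2 := by
    rw [Finset.sum_Ico_add' (fun j => (∑ i ∈ S, olevskii k i j)^2) 1 (2^k) 1]
    rfl
  rw [h1]
  refine h.trans ?_
  simp only [sub_self, Real.rpow_zero, one_mul, tsub_self, pow_zero]
  have h2 : ∀ ν, dyT S 1 ν ^ 2 = ∑ i ∈ S, if ν + 1 = i then (1:ℝ) else 0 := by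
    intro ν
    have : dyT S 1 ν = ∑ i ∈ S, if ν + 1 = i then (1:ℝ) else 0 := by
      unfold dyT
      refine Finset.sum_congr rfl fun i _ => ?_
      congr 1
      simp only [mul_one, eq_iff_iff]
      omega
    rw [this, Finset.sum_ite_eq]
    split_ifs <;> simp
  simp only [h2]
  rw [Finset.sum_comm]
  refine (Finset.sum_le_card_nsmul S _ 1 fun i _ => ?_).trans (by simp)
  rw [← Finset.sum_filter]
  rw [Finset.sum_const, nsmul_eq_mul, mul_one]
  have : (Finset.filter (fun ν => ν + 1 = i) (Finset.range (2^k))).card ≤ 1 :=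
    Finset.card_le_one.2 fun a ha b hb => by
      simp only [Finset.mem_filter] at ha hb; omega
  exact_mod_cast this

theorem Nn_pos (k : ℕ) : 1 ≤ Nn k := Nat.one_le_two_pow

theorem Nn_sqrt_succ (k : ℕ) : 2 * Real.sqrt (Nn k) ≤ Real.sqrt (Nn (k+1)) := by
  have h : 4 * Nn k ≤ Nn (k+1) := by
    unfold Nn
    have : 2 + 10^k ≤ 10^(k+1) := by
      have : 1 ≤ 10^k := Nat.one_le_pow _ _ (by norm_num)
      rw [pow_succ]; omega
    calc 4 * 2^10^k = 2^(2+10^k) := by rw [pow_add]; norm_num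
      _ ≤ _ := Nat.pow_le_pow_right (by norm_num) this
  have h2 : (2:ℝ) = Real.sqrt 4 := by
    rw [show (4:ℝ) = 2^2 by norm_num, Real.sqrt_sq (by norm_num)]
  rw [h2, ← Real.sqrt_mul (by norm_num)]
  exact Real.sqrt_le_sqrt (by exact_mod_cast h)

theorem Nn_sqrt_sum (K : ℕ) : ∑ k ∈ Finset.range K, Real.sqrt (Nn k) ≤ Real.sqrt (Nn K) := by
  induction K with
  | zero => simp
  | succ K ih =>
    rw [Finset.sum_range_succ]
    linarith [Nn_sqrt_succ K]

theorem scalar_bound (n : ℕ → ℕ) (hn : ∀ k, n k ≤ Nn k) (K : ℕ) :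
    (∑ k ∈ Finset.range K, (n k : ℝ) / Real.sqrt (Nn k))^2 ≤ 3 * ∑ k ∈ Finset.range K, (n k : ℝ) := by
  have hb : ∀ k, (n k : ℝ) / Real.sqrt (Nn k) ≤ Real.sqrt (Nn k) := by
    intro k
    have h1 : 0 < Real.sqrt (Nn k) := Real.sqrt_pos.2 (by exact_mod_cast Nn_pos k)
    rw [div_le_iff₀ h1, Real.mul_self_sqrt (by positivity)]
    exact_mod_cast hn k
  induction K with
  | zero => simp
  | succ K ih =>
    rw [Finset.sum_range_succ, Finset.sum_range_succ]
    have h1 : 0 < Real.sqrt (Nn K) := Real.sqrt_pos.2 (by exact_mod_cast Nn_pos K)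
    have h2 : ∑ k ∈ Finset.range K, (n k : ℝ) / Real.sqrt (Nn k) ≤ Real.sqrt (Nn K) :=
      (Finset.sum_le_sum fun k _ => hb k).trans (Nn_sqrt_sum K)
    have h3 : (n K : ℝ) = (n K : ℝ) / Real.sqrt (Nn K) * Real.sqrt (Nn K) := by field_simp
    have h4 := hb K
    have h5 : 0 ≤ (n K : ℝ) / Real.sqrt (Nn K) := by positivity
    rw [mul_add]
    generalize (n K : ℝ) / Real.sqrt (Nn K) = b at *
    rw [h3]
    nlinarith

theorem phi_abs (k : ℕ) (t : ℝ) : |phi k t| ≤ 1 := by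
  unfold phi walsh
  rw [Finset.abs_prod]
  refine Finset.prod_le_one (fun _ _ => abs_nonneg _) fun j _ => ?_
  split_ifs
  · exact rad_abs _ _
  · simp

theorem reindex (c : ℕ → ℕ → ℝ) (K : ℕ) : ∃ d : ℕ → ℝ,
    (∀ t, radSum (Fn K) d t = ∑ k ∈ Finset.range K, ∑ j ∈ Finset.Icc 2 (Nn (k+1)),
      c (k+1) j * rademacher (Fn k + j - 1) t) ∧
    ∑ l ∈ Finset.range (Fn K), d l ^ 2 =
      ∑ k ∈ Finset.range K, ∑ j ∈ Finset.Icc 2 (Nn (k+1)), c (k+1) j ^ 2 := by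
  induction K with
  | zero => exact ⟨0, by simp [Fn, radSum], by simp [Fn]⟩
  | succ K ih =>
    obtain ⟨d, h1, h2⟩ := ih
    have hF : Fn (K+1) = Fn K + (Nn (K+1) - 1) := by
      have := Nn_pos (K+1)
      simp only [Fn]; omega
    have hI : ∀ f : ℕ → ℝ, ∑ j ∈ Finset.Icc 2 (Nn (K+1)), f j =
        ∑ x ∈ Finset.range (Nn (K+1) - 1), f (x+2) := by
      intro f
      have : Finset.Icc 2 (Nn (K+1)) = Finset.Ico 2 (Nn (K+1) + 1) := rfl
      rw [this, Finset.sum_Ico_eq_sum_range]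
      refine Finset.sum_congr rfl fun x _ => ?_
      rw [add_comm]
    refine ⟨fun l => if l < Fn K then d l else c (K+1) (l - Fn K + 2), ?_, ?_⟩
    · intro t
      rw [Finset.sum_range_succ, ← h1, hF, hI]
      unfold radSum
      rw [Finset.sum_range_add]
      congr 1
      · refine Finset.sum_congr rfl fun l hl => ?_
        beta_reduce
        rw [if_pos (Finset.mem_range.1 hl)]
      · refine Finset.sum_congr rfl fun l hl => ?_
        beta_reduce
        rw [if_neg (by omega), Nat.add_sub_cancel_left]
        rfl
    · rw [Finset.sum_range_succ, ← h2, hF, hI, Finset.sum_range_add]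
      congr 1
      · refine Finset.sum_congr rfl fun l hl => ?_
        beta_reduce
        rw [if_pos (Finset.mem_range.1 hl)]
      · refine Finset.sum_congr rfl fun l hl => ?_
        beta_reduce
        rw [if_neg (by omega), Nat.add_sub_cancel_left]

/-- Block index. -/
noncomputable def blk (m : ℕ) : ℕ :=
  Nat.find (show ∃ k, m + 1 ≤ cum k from ⟨m + 1, le_cum (m + 1)⟩)

theorem blk_spec (m : ℕ) : ∃ k, blk m = k + 1 ∧ cum k < m + 1 ∧ m + 1 ≤ cum k + Nn (k+1) := by
  have h1 : m + 1 ≤ cum (blk m) :=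
    Nat.find_spec (show ∃ k, m + 1 ≤ cum k from ⟨m + 1, le_cum (m + 1)⟩)
  rcases hk : blk m with _ | k
  · rw [hk] at h1; simp [cum] at h1
  · refine ⟨k, rfl, ?_, ?_⟩
    · have : k < blk m := by omega
      have := Nat.find_min (show ∃ k, m + 1 ≤ cum k from ⟨m + 1, le_cum (m + 1)⟩) this
      omega
    · rw [hk] at h1; exact h1

theorem psi_eq (m : ℕ) : psi m = psiBlock (blk m) (m + 1 - cum (blk m - 1)) := rfl

theorem blocks (Λ : Finset ℕ) : ∃ (K : ℕ) (S : ℕ → Finset ℕ),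
    (∀ k, (S k).card ≤ Nn (k+1)) ∧ (Λ.card = ∑ k ∈ Finset.range K, (S k).card) ∧
    ∀ t, ∑ m ∈ Λ, psi m t = ∑ k ∈ Finset.range K, ∑ i ∈ S k, psiBlock (k+1) i t := by
  classical
  let fib : ℕ → Finset ℕ := fun k => Λ.filter (fun m => blk m - 1 = k)
  have hinj : ∀ k, Set.InjOn (fun m => m + 1 - cum k) (fib k : Set ℕ) := by
    intro k a ha b hb hab
    simp only [fib, Finset.coe_filter, Set.mem_ofPred_eq] at ha hb
    obtain ⟨ka, h1, h2, h3⟩ := blk_spec a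
    obtain ⟨kb, h4, h5, h6⟩ := blk_spec b
    have : ka = k := by omega
    have : kb = k := by omega
    subst ka kb
    simp only [] at hab
    omega
  let K := Λ.sup (fun m => blk m - 1) + 1
  have hmaps : ∀ m ∈ Λ, blk m - 1 ∈ Finset.range K := fun m hm =>
    Finset.mem_range.2 (Nat.lt_succ_of_le (Finset.le_sup (f := fun m => blk m - 1) hm))
  refine ⟨K, fun k => (fib k).image (fun m => m + 1 - cum k), ?_, ?_, ?_⟩
  · intro k
    have : (fib k).image (fun m => m + 1 - cum k) ⊆ Finset.Icc 1 (Nn (k+1)) := by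
      intro i hi
      obtain ⟨m, hm, rfl⟩ := Finset.mem_image.1 hi
      simp only [fib, Finset.mem_filter] at hm
      obtain ⟨ka, h1, h2, h3⟩ := blk_spec m
      have : ka = k := by omega
      subst ka
      rw [Finset.mem_Icc]; omega
    simpa using Finset.card_le_card this
  · rw [Finset.card_eq_sum_card_fiberwise hmaps]
    exact Finset.sum_congr rfl fun k _ => (Finset.card_image_of_injOn (hinj k)).symm
  · intro t
    rw [← Finset.sum_fiberwise_of_maps_to hmaps]
    refine Finset.sum_congr rfl fun k _ => ?_
    rw [Finset.sum_image (hinj k)]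
    refine Finset.sum_congr rfl fun m hm => ?_
    have hm2 := (Finset.mem_filter.1 hm).2
    obtain ⟨ka, h1, h2, h3⟩ := blk_spec m
    have : ka = k := by omega
    subst ka
    rw [psi_eq, h1, Nat.add_sub_cancel]

/-- For `2 < p < ∞` there is `C'` with `‖∑_{m∈Λ} ψ_m‖_p ≤ C' |Λ|^{1/2}` for all finite `Λ`. -/
theorem stmt_8 (p : ℝ) (hp : 2 < p) :
    ∃ C' : ℝ, ∀ Λ : Finset ℕ,
      LpNorm p (fun t => ∑ m ∈ Λ, psi m t) ≤ C' * (Λ.card : ℝ) ^ ((1:ℝ)/2) := by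
  obtain ⟨C, hC⟩ := main_bound p hp (Real.sqrt 3)
  refine ⟨C, fun Λ => ?_⟩
  obtain ⟨K, S, hS, hcard, hsum⟩ := blocks Λ
  obtain ⟨d, hd1, hd2⟩ := reindex (fun k j => ∑ i ∈ S (k-1), olevskii (10^k) i j) K
  have hcard' : (Λ.card : ℝ) = ∑ k ∈ Finset.range K, ((S k).card : ℝ) := by
    rw [hcard]; push_cast; rfl
  refine hC Λ.card _ (Fn K) d ?_ ?_
  · rw [hd2, hcard']
    refine Finset.sum_le_sum fun k _ => ?_
    exact bessel (10^(k+1)) (S k)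
  · intro t
    have h1 : ∑ m ∈ Λ, psi m t - radSum (Fn K) d t =
        ∑ k ∈ Finset.range K, (S k).card / Real.sqrt (Nn (k+1)) * phi (k+1) t := by
      rw [hsum, hd1, ← Finset.sum_sub_distrib]
      refine Finset.sum_congr rfl fun k _ => ?_
      unfold psiBlock
      rw [Finset.sum_add_distrib, Finset.sum_comm]
      simp only [Nat.add_sub_cancel, Finset.sum_mul, Finset.sum_const, nsmul_eq_mul]
      ring
    simp only [h1]
    refine (Finset.abs_sum_le_sum_abs _ _).trans ?_
    refine (Finset.sum_le_sum (g := fun k => ((S k).card : ℝ) / Real.sqrt (Nn (k+1)))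
      fun k _ => ?_).trans ?_
    · rw [abs_mul, abs_of_nonneg (by positivity)]
      exact mul_le_of_le_one_right (by positivity) (phi_abs _ _)
    · rw [← Real.sqrt_mul (by norm_num)]
      apply Real.le_sqrt_of_sq_le
      have h := scalar_bound (fun k => if k = 0 then 0 else (S (k-1)).card) (fun k => by
        rcases k with _ | k
        · simp
        · simpa using hS k) (K+1)
      rw [Finset.sum_range_succ', Finset.sum_range_succ'] at h
      simp only [Nat.add_sub_cancel, if_neg (Nat.succ_ne_zero _), if_true, Nat.cast_zero,
        zero_div, add_zero] at h
      rw [hcard']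
      exact h
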